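/- arXiv:1805.03382 — 2 statements merged into one kernel-verified Lean document; each statement's English description precedes it below -/
import Mathlib

section
/- Every symmetric menu M on [0,1]^2 with at most 3 items (including the zero item ((0,0),0)) has revenue strictly less than 59/108 under the uniform distribution on [0,1]^2; hence the optimal at-most-three-item menu for the (symmetric) uniform distribution on [0,1]^2 must be asymmetric. -/
open MeasureTheory Real

noncomputable section

/-- Utility of a buyer with value `v = (v₁, v₂)` for a menu item
`it = ((x₁, x₂), p)`, namely `v₁ * x₁ + v₂ * x₂ - p`. -/
def util (v : ℝ × ℝ) (it : (ℝ × ℝ) × ℝ) : ℝ :=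
  v.1 * it.1.1 + v.2 * it.1.2 - it.2

/-- `M` is a menu: every item has allocation in `[0,1]²` and nonnegative price,
and the zero item `((0,0),0)` belongs to `M`. -/
def IsMenu (M : Finset ((ℝ × ℝ) × ℝ)) : Prop :=
  (((0 : ℝ), (0 : ℝ)), (0 : ℝ)) ∈ M ∧
    ∀ it ∈ M, it.1.1 ∈ Set.Icc (0 : ℝ) 1 ∧ it.1.2 ∈ Set.Icc (0 : ℝ) 1 ∧ 0 ≤ it.2

/-- The price paid by a buyer with value `v`: the highest price among the
utility-maximizing menu items of `M`. -/
def buyerPrice (M : Finset ((ℝ × ℝ) × ℝ)) (v : ℝ × ℝ) : ℝ :=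
  sSup {p : ℝ | ∃ it ∈ M, it.2 = p ∧ ∀ it' ∈ M, util v it' ≤ util v it}

/-- Revenue of the menu `M` under the uniform distribution on `[0,1]²`. -/
def rev (M : Finset ((ℝ × ℝ) × ℝ)) : ℝ :=
  ∫ v in Set.Icc ((0 : ℝ), (0 : ℝ)) ((1 : ℝ), (1 : ℝ)), buyerPrice M v

/-- A menu is symmetric if it is closed under swapping the two coordinates of
the allocation. -/
def SymmetricMenu (M : Finset ((ℝ × ℝ) × ℝ)) : Prop :=
  ∀ it ∈ M, ((it.1.2, it.1.1), it.2) ∈ M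

def stepF (c r : ℝ) (v : ℝ × ℝ) : ℝ := if r ≤ c * (v.1 + v.2) then r else 0

lemma stepF_meas (c r : ℝ) : Measurable (stepF c r) := by
  unfold stepF
  refine Measurable.ite ?_ measurable_const measurable_const
  exact measurableSet_le measurable_const (by fun_prop)

lemma stepF_nonneg (c r : ℝ) (hr : 0 ≤ r) (v : ℝ × ℝ) : 0 ≤ stepF c r v := by
  unfold stepF; split_ifs <;> simp [hr]

lemma stepF_le (c r : ℝ) (hr : 0 ≤ r) (v : ℝ × ℝ) : stepF c r v ≤ r := by
  unfold stepF; split_ifs <;> simp [hr]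

lemma stepF_int (c r : ℝ) (hr : 0 ≤ r) :
    IntegrableOn (stepF c r) (Set.Icc ((0 : ℝ), (0 : ℝ)) ((1 : ℝ), (1 : ℝ))) := by
  refine Measure.integrableOn_of_bounded (M := r) ?_ (stepF_meas c r).aestronglyMeasurable ?_
  · exact isCompact_Icc.measure_lt_top.ne
  · refine Filter.Eventually.of_forall fun v => ?_
    rw [Real.norm_eq_abs, abs_of_nonneg (stepF_nonneg c r hr v)]
    exact stepF_le c r hr v

lemma inner_eq (t x : ℝ) :
    ∫ y in Set.Icc (0 : ℝ) 1, stepF 1 t (x, y) = t * max 0 (1 - max 0 (t - x)) := by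
  have h : ∀ y, stepF 1 t (x, y) = (Set.Ici (t - x)).indicator (fun _ => t) y := by
    intro y
    simp only [stepF, Set.indicator, Set.mem_Ici, one_mul]
    congr 1
    simp only [eq_iff_iff]
    constructor <;> intro h <;> linarith
  simp_rw [h]
  rw [setIntegral_indicator measurableSet_Ici]
  have h2 : Set.Icc (0 : ℝ) 1 ∩ Set.Ici (t - x) = Set.Icc (max 0 (t - x)) 1 := by
    ext y; simp only [Set.mem_inter_iff, Set.mem_Icc, Set.mem_Ici, sup_le_iff]; tauto
  rw [h2, setIntegral_const, Measure.real, Real.volume_Icc, ENNReal.toReal_ofReal', smul_eq_mul,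
    mul_comm, max_comm (1 - _) 0]

lemma int_eq (t : ℝ) (ht : 0 ≤ t) :
    ∫ v in Set.Icc ((0 : ℝ), (0 : ℝ)) ((1 : ℝ), (1 : ℝ)), stepF 1 t v
      = t * ∫ x in (0:ℝ)..1, max 0 (1 - max 0 (t - x)) := by
  have hI := stepF_int 1 t ht
  rw [← Set.Icc_prod_Icc] at hI ⊢
  rw [Measure.volume_eq_prod] at hI ⊢
  rw [setIntegral_prod _ hI]
  simp_rw [inner_eq]
  rw [integral_Icc_eq_integral_Ioc, ← intervalIntegral.integral_of_le zero_le_one,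
    intervalIntegral.integral_const_mul]

lemma area_small (t : ℝ) (ht : 0 ≤ t) (h1 : t ≤ 1) :
    ∫ x in (0:ℝ)..1, max 0 (1 - max 0 (t - x)) ≤ 1 - t ^ 2 / 2 := by
  have hc : Continuous fun x : ℝ => max 0 (1 - max 0 (t - x)) := by fun_prop
  rw [← intervalIntegral.integral_add_adjacent_intervals (b := t)
    (hc.intervalIntegrable _ _) (hc.intervalIntegrable _ _)]
  have e1 : ∫ x in (0:ℝ)..t, max 0 (1 - max 0 (t - x)) ≤ ∫ x in (0:ℝ)..t, (1 - t + x) := by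
    refine intervalIntegral.integral_mono_on ht (hc.intervalIntegrable _ _)
      ((by fun_prop : Continuous fun x : ℝ => 1 - t + x).intervalIntegrable _ _) ?_
    intro x hx
    have := hx.1
    have := hx.2
    refine max_le (by linarith) ?_
    have := le_max_right 0 (t - x)
    linarith
  have e2 : ∫ x in t..1, max 0 (1 - max 0 (t - x)) ≤ ∫ x in t..1, (1:ℝ) := by
    refine intervalIntegral.integral_mono_on h1 (hc.intervalIntegrable _ _)
      (continuous_const.intervalIntegrable _ _) ?_
    intro x hx
    refine max_le (by linarith) ?_
    have := le_max_left 0 (t - x)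
    linarith
  have e3 : ∫ x in (0:ℝ)..t, (1 - t + x) = (1 - t) * t + t ^ 2 / 2 := by
    rw [intervalIntegral.integral_add (by simp) (by simp)]
    simp
    ring
  have e4 : ∫ x in t..1, (1:ℝ) = 1 - t := by simp
  nlinarith

lemma area_big (t : ℝ) (h1 : 1 ≤ t) (h2 : t ≤ 2) :
    ∫ x in (0:ℝ)..1, max 0 (1 - max 0 (t - x)) ≤ (2 - t) / 2 := by
  have hc : Continuous fun x : ℝ => max 0 (1 - max 0 (t - x)) := by fun_prop
  have e1 : ∫ x in (0:ℝ)..1, max 0 (1 - max 0 (t - x)) ≤ ∫ x in (0:ℝ)..1, (2 - t) * x := by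
    refine intervalIntegral.integral_mono_on zero_le_one (hc.intervalIntegrable _ _)
      ((by fun_prop : Continuous fun x : ℝ => (2 - t) * x).intervalIntegrable _ _) ?_
    intro x hx
    have h3 := hx.1
    have h4 := hx.2
    refine max_le (by nlinarith) ?_
    have := le_max_right 0 (t - x)
    nlinarith
  have e3 : ∫ x in (0:ℝ)..1, (2 - t) * x = (2 - t) / 2 := by
    rw [intervalIntegral.integral_const_mul]
    simp
    ring
  linarith

lemma key1 (t : ℝ) (ht : 0 ≤ t) :
    ∫ v in Set.Icc ((0 : ℝ), (0 : ℝ)) ((1 : ℝ), (1 : ℝ)), stepF 1 t v ≤ 109 / 200 := by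
  rcases le_total t 1 with h1 | h1
  · rw [int_eq t ht]
    have := mul_le_mul_of_nonneg_left (area_small t ht h1) ht
    nlinarith [mul_nonneg (by linarith : 0 ≤ t + 1) (sq_nonneg (t - 4082/5000)), sq_nonneg (t - 4082/5000), mul_nonneg ht (sq_nonneg (t - 4082/5000))]
  rcases le_total t 2 with h2 | h2
  · rw [int_eq t ht]
    have := mul_le_mul_of_nonneg_left (area_big t h1 h2) ht
    nlinarith [sq_nonneg (t - 1)]
  · rw [int_eq t ht]
    have e : ∫ x in (0:ℝ)..1, max 0 (1 - max 0 (t - x)) ≤ ∫ x in (0:ℝ)..1, (0:ℝ) := by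
      refine intervalIntegral.integral_mono_on zero_le_one
        ((by fun_prop : Continuous fun x : ℝ => max 0 (1 - max 0 (t - x))).intervalIntegrable _ _)
        (continuous_const.intervalIntegrable _ _) ?_
      intro x hx
      have h4 := hx.2
      refine max_le le_rfl ?_
      have := le_max_right 0 (t - x)
      linarith
    simp only [intervalIntegral.integral_zero] at e
    nlinarith

lemma key (c r : ℝ) (hc : 0 ≤ c) (hr : 0 ≤ r) :
    ∫ v in Set.Icc ((0 : ℝ), (0 : ℝ)) ((1 : ℝ), (1 : ℝ)), stepF c r v ≤ c * (109 / 200) := by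
  rcases hc.eq_or_lt with rfl | hc
  · have : ∀ v, stepF 0 r v = 0 := by
      intro v; unfold stepF; split_ifs with h
      · linarith
      · rfl
    simp [this]
  · have : ∀ v, stepF c r v = c * stepF 1 (r / c) v := by
      intro v
      simp only [stepF, one_mul, div_le_iff₀ hc, mul_comm c]
      split_ifs
      · field_simp
      · simp
    simp_rw [this]
    rw [integral_const_mul]
    exact mul_le_mul_of_nonneg_left (key1 _ (by positivity)) hc.le

/-- Comparison of the revenue with a pointwise upper bound. -/
lemma rev_le (M : Finset ((ℝ × ℝ) × ℝ)) (hM : IsMenu M) (c r c' r' : ℝ)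
    (hc : 0 ≤ c) (hr : 0 ≤ r) (hc' : 0 ≤ c') (hr' : 0 ≤ r') (hcc : c + c' ≤ 1)
    (H : ∀ v : ℝ × ℝ, 0 ≤ v.1 → 0 ≤ v.2 → ∀ it ∈ M, (∀ it' ∈ M, util v it' ≤ util v it) →
      it.2 ≤ stepF c r v + stepF c' r' v) : rev M < 59 / 108 := by
  have h1 : rev M ≤ ∫ v in Set.Icc ((0 : ℝ), (0 : ℝ)) ((1 : ℝ), (1 : ℝ)),
      (stepF c r v + stepF c' r' v) := by
    unfold rev
    refine integral_mono_of_nonneg ?_ ((stepF_int c r hr).add (stepF_int c' r' hr')) ?_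
    · refine Filter.Eventually.of_forall fun v => Real.sSup_nonneg ?_
      rintro p ⟨it, hit, rfl, -⟩
      exact (hM.2 it hit).2.2
    · refine (ae_restrict_iff' measurableSet_Icc).2 (Filter.Eventually.of_forall fun v hv => ?_)
      refine Real.sSup_le ?_ (add_nonneg (stepF_nonneg _ _ hr _) (stepF_nonneg _ _ hr' _))
      rintro p ⟨it, hit, rfl, ho⟩
      exact H v hv.1.1 hv.1.2 it hit ho
  rw [integral_add (stepF_int c r hr) (stepF_int c' r' hr')] at h1
  have := key c r hc hr
  have := key c' r' hc' hr'
  linarith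

lemma menu_three (M : Finset ((ℝ × ℝ) × ℝ)) (z : (ℝ × ℝ) × ℝ) (hz : z ∈ M) (h : M.card ≤ 3) :
    ∃ i j, ∀ x, x ∈ M ↔ x = z ∨ x = i ∨ x = j := by
  classical
  have h2 : (M.erase z).card ≤ 2 := by rw [Finset.card_erase_of_mem hz]; omega
  have h3 : ∃ i j, ∀ x, x ∈ M ↔ x = z ∨ x = i ∨ x = j := by
    have hx : ∀ x, x ∈ M ↔ x = z ∨ x ∈ M.erase z := by
      intro x
      by_cases hxz : x = z
      · simp [hxz, hz]
      · simp [hxz]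
    interval_cases hcard : (M.erase z).card
    · rw [Finset.card_eq_zero] at hcard
      exact ⟨z, z, fun x => by rw [hx, hcard]; simp⟩
    · obtain ⟨i, hi⟩ := Finset.card_eq_one.1 hcard
      exact ⟨i, i, fun x => by rw [hx, hi]; simp⟩
    · obtain ⟨i, j, -, hi⟩ := Finset.card_eq_two.1 hcard
      exact ⟨i, j, fun x => by rw [hx, hi]; simp⟩
  exact h3

/-- Both nonzero items have the same price. -/
lemma case_same (M : Finset ((ℝ × ℝ) × ℝ)) (hM : IsMenu M) (p : ℝ) (hp : 0 ≤ p)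
    (H : ∀ it ∈ M, it.2 = 0 ∨ it.2 = p) : rev M < 59 / 108 := by
  refine rev_le M hM 1 p 0 0 zero_le_one hp le_rfl le_rfl (by norm_num) ?_
  intro v h1 h2 it hit ho
  have h0 := stepF_nonneg 1 p hp v
  have h0' := stepF_nonneg 0 0 le_rfl v
  rcases H it hit with h | h
  · linarith
  · have hz := ho _ hM.1
    obtain ⟨⟨-, ha⟩, ⟨-, hb⟩, -⟩ := hM.2 it hit
    simp only [util] at hz
    have : p ≤ 1 * (v.1 + v.2) := by nlinarith
    have : stepF 1 p v = p := by simp only [stepF]; rw [if_pos this]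
    linarith

/-- Two items on the diagonal. -/
lemma case_diag (M : Finset ((ℝ × ℝ) × ℝ)) (hM : IsMenu M) (a p b q : ℝ) (hab : a ≤ b)
    (H : ∀ x, x ∈ M ↔ x = ((0, 0), 0) ∨ x = ((a, a), p) ∨ x = ((b, b), q)) :
    rev M < 59 / 108 := by
  obtain ⟨⟨ha0, ha1⟩, -, hp⟩ := hM.2 ((a, a), p) ((H _).2 (by simp))
  obtain ⟨⟨hb0, hb1⟩, -, hq⟩ := hM.2 ((b, b), q) ((H _).2 (by simp))
  simp only at ha0 ha1 hp hb0 hb1 hq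
  have mz : (((0:ℝ), (0:ℝ)), (0:ℝ)) ∈ M := hM.1
  have m1 : ((a, a), p) ∈ M := (H _).2 (by simp)
  have m2 : ((b, b), q) ∈ M := (H _).2 (by simp)
  by_cases hcase : p ≤ q ∧ p * (b - a) ≤ a * (q - p)
  · obtain ⟨hpq, ht⟩ := hcase
    refine rev_le M hM a p (b - a) (q - p) ha0 hp (by linarith) (by linarith) (by linarith) ?_
    intro v h1 h2 it hit ho
    have n1 := stepF_nonneg a p hp v
    have n2 := stepF_nonneg (b - a) (q - p) (by linarith) v
    have oz := ho _ mz
    have o1 := ho _ m1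
    have o2 := ho _ m2
    rcases (H it).1 hit with rfl | rfl | rfl
    · simp only; linarith
    · simp only [util] at *
      have : p ≤ a * (v.1 + v.2) := by nlinarith
      have : stepF a p v = p := by simp only [stepF]; rw [if_pos this]
      linarith
    · simp only [util] at *
      have e2 : q - p ≤ (b - a) * (v.1 + v.2) := by nlinarith
      have e1 : p ≤ a * (v.1 + v.2) := by
        rcases hab.eq_or_lt with rfl | hlt
        · nlinarith
        · have hd : 0 < b - a := by linarith
          have := mul_le_mul_of_nonneg_left e2 ha0
          refine le_of_mul_le_mul_right ?_ hd
          nlinarith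
      have : stepF a p v = p := by simp only [stepF]; rw [if_pos e1]
      have : stepF (b - a) (q - p) v = q - p := by simp only [stepF]; rw [if_pos e2]
      linarith
  · refine rev_le M hM 1 q 0 0 zero_le_one hq le_rfl le_rfl (by norm_num) ?_
    intro v h1 h2 it hit ho
    have n1 := stepF_nonneg 1 q hq v
    have n2 := stepF_nonneg 0 0 le_rfl v
    have oz := ho _ mz
    have o1 := ho _ m1
    have o2 := ho _ m2
    rcases (H it).1 hit with rfl | rfl | rfl
    · simp only; linarith
    · exfalso
      simp only [util] at *
      have e1 : p ≤ a * (v.1 + v.2) := by nlinarith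
      have e2 : (b - a) * (v.1 + v.2) ≤ q - p := by nlinarith
      apply hcase
      have e3 : 0 ≤ (b - a) * (v.1 + v.2) := mul_nonneg (by linarith) (by linarith)
      refine ⟨by linarith, ?_⟩
      have := mul_le_mul_of_nonneg_left e2 ha0
      have := mul_le_mul_of_nonneg_right e1 (by linarith : 0 ≤ b - a)
      nlinarith
    · simp only [util] at *
      have : q ≤ 1 * (v.1 + v.2) := by nlinarith
      have : stepF 1 q v = q := by simp only [stepF]; rw [if_pos this]
      linarith

lemma main_lt (M : Finset ((ℝ × ℝ) × ℝ)) (hM : IsMenu M) (hS : SymmetricMenu M)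
    (hc : M.card ≤ 3) : rev M < 59 / 108 := by
  obtain ⟨⟨⟨a, a'⟩, p⟩, ⟨⟨b, b'⟩, q⟩, H⟩ := menu_three M _ hM.1 hc
  have hi := (H _).1 (hS _ ((H ((a, a'), p)).2 (by simp)))
  have hj := (H _).1 (hS _ ((H ((b, b'), q)).2 (by simp)))
  have hp : 0 ≤ p := (hM.2 ((a, a'), p) ((H _).2 (by simp))).2.2
  by_cases hpq : p = q
  · subst hpq
    refine case_same M hM p hp ?_
    intro it hit
    rcases (H it).1 hit with rfl | rfl | rfl <;> simp
  · simp only [Prod.mk.injEq] at hi hj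
    have h1 : a' = a := by
      rcases hi with h | h | h
      · rw [h.1.1, h.1.2]
      · exact h.1.1
      · exact absurd h.2 hpq
    have h2 : b' = b := by
      rcases hj with h | h | h
      · rw [h.1.1, h.1.2]
      · exact absurd h.2.symm hpq
      · exact h.1.1
    subst h1 h2
    rcases le_total a' b' with h | h
    · exact case_diag M hM _ _ _ _ h H
    · exact case_diag M hM _ _ _ _ h (fun x => by rw [H]; tauto)

/-- every symmetric menu on `[0,1]²` with at most 3 items has
revenue strictly less than `59/108`; hence any at-most-three-item menu
achieving revenue `59/108` (the optimum) must be asymmetric. -/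
theorem symmetric_three_menu_revenue_lt :
    (∀ M : Finset ((ℝ × ℝ) × ℝ), IsMenu M → SymmetricMenu M → M.card ≤ 3 →
      rev M < 59 / 108) ∧
    (∀ M : Finset ((ℝ × ℝ) × ℝ), IsMenu M → M.card ≤ 3 →
      rev M = 59 / 108 → ¬ SymmetricMenu M) := by
  refine ⟨main_lt, fun M hM hc hr hS => ?_⟩
  have := main_lt M hM hS hc
  linarith
end
end

section
/- Let p > q > 1 and δ ∈ [0,1) satisfy (p − q)/(1 − δ) < 1 and (q − δ*p)/(1 − δ) < 1. Then the menu M = {((0,0),0), ((1,1),p), ((1,δ),q)} has revenue strictly less than 1/2 under the uniform distribution on [0,1]^2. -/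
open MeasureTheory Real

noncomputable section

theorem aux_poly (b c δ : ℝ) (hb : 0 < b) (hb1 : b < 1) (hc : c < 1) (hδ : 0 < δ) (hbc : b < δ * c)
    (hδ1 : δ < 1) :
    (1 - b + c) * ((1 - c) * ((1 - c) / 2 + b)) + (1 - b + δ * c) * (b ^ 2 / (2 * δ)) < 1 / 2 := by
  have hc0 : 0 < c := by
    by_contra h
    nlinarith
  have hbc' : b < c := by nlinarith
  have h1 : (1 - b + δ * c) * (b ^ 2 / (2 * δ)) < b * c / 2 := by
    rw [← mul_div_assoc, div_lt_iff₀ (by positivity)]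
    have : 0 < b * (1 - b) * (δ * c - b) :=
      mul_pos (mul_pos hb (by linarith)) (by linarith)
    nlinarith
  have h2 : (1 - b + c) * ((1 - c) * ((1 - c) / 2 + b)) + b * c / 2 ≤ 1 / 2 := by
    have : 0 ≤ (c - b) * (1 + (1 - c + b) * (c - b) - b * (1 - b)) := by
      apply mul_nonneg (by linarith)
      have : 0 ≤ (1 - c + b) * (c - b) := mul_nonneg (by linarith) (by linarith)
      nlinarith
    nlinarith
  linarith

def gg (p q δ c : ℝ) (v : ℝ × ℝ) : ℝ :=
  if c ≤ v.2 then (if p - v.2 ≤ v.1 then p else 0) else (if q - δ * v.2 ≤ v.1 then q else 0)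

theorem gg_meas (p q δ c : ℝ) : Measurable (gg p q δ c) := by
  unfold gg
  refine Measurable.ite (measurableSet_le (by fun_prop) (by fun_prop)) ?_ ?_
  · exact Measurable.ite (measurableSet_le (by fun_prop) (by fun_prop)) (by fun_prop) (by fun_prop)
  · exact Measurable.ite (measurableSet_le (by fun_prop) (by fun_prop)) (by fun_prop) (by fun_prop)

theorem inner_int (t P : ℝ) (ht : 0 ≤ t) :
    ∫ x in Set.Icc (0:ℝ) 1, (if t ≤ x then P else 0) = P * max 0 (1 - t) := by
  have : (fun x : ℝ => if t ≤ x then P else 0) = (Set.Ici t).indicator (fun _ => P) := by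
    ext x; simp [Set.indicator]
  rw [this, setIntegral_indicator measurableSet_Ici, setIntegral_const]
  have : Set.Icc (0:ℝ) 1 ∩ Set.Ici t = Set.Icc t 1 := by
    ext x; simp only [Set.mem_inter_iff, Set.mem_Icc, Set.mem_Ici]
    constructor
    · rintro ⟨⟨_, _⟩, _⟩; constructor <;> assumption
    · rintro ⟨_, _⟩; refine ⟨⟨?_, ?_⟩, ?_⟩ <;> linarith
  rw [this, Real.volume_real_Icc, smul_eq_mul, mul_comm, max_comm]

theorem price_le (p q δ c : ℝ) (hq : 1 < q) (hqp : q < p) (hδ1 : δ < 1)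
    (hc : c * (1 - δ) = p - q) (v : ℝ × ℝ) :
    buyerPrice {(((0 : ℝ), (0 : ℝ)), (0 : ℝ)),
         (((1 : ℝ), (1 : ℝ)), p),
         (((1 : ℝ), δ), q)} v ≤ gg p q δ c v := by
  have h0 : 0 ≤ gg p q δ c v := by
    unfold gg; split_ifs <;> linarith
  unfold buyerPrice
  apply Real.sSup_le _ h0
  rintro r ⟨it, hit, rfl, hmax⟩
  simp only [Finset.mem_insert, Finset.mem_singleton] at hit
  have e0 := hmax (((0 : ℝ), (0 : ℝ)), (0 : ℝ)) (by simp)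
  have e1 := hmax (((1 : ℝ), (1 : ℝ)), p) (by simp)
  have e2 := hmax (((1 : ℝ), δ), q) (by simp)
  rcases hit with rfl | rfl | rfl
  · exact h0
  · simp only [util] at e0 e1 e2
    have : c ≤ v.2 := by
      by_contra h
      nlinarith
    simp only [gg]
    rw [if_pos this, if_pos (by linarith)]
  · simp only [util] at e0 e1 e2
    simp only [gg]
    by_cases h : c ≤ v.2
    · have : v.2 = c := by
        apply le_antisymm _ h
        by_contra h'
        nlinarith
      rw [if_pos h, if_pos (by rw [this] at e0 ⊢; nlinarith)]
      exact hqp.le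
    · rw [if_neg h, if_pos (by linarith)]

theorem piece (F : ℝ → ℝ) (A B l r : ℝ) (hlr : l ≤ r) (h : ∀ y ∈ Set.Ioo l r, A + B * y = F y) :
    IntervalIntegrable F volume l r ∧ ∫ y in l..r, F y = A * (r - l) + B * ((r ^ 2 - l ^ 2) / 2) := by
  have hc : Continuous fun y : ℝ => A + B * y := by fun_prop
  constructor
  · apply (hc.intervalIntegrable l r).congr_uIoo
    rw [Set.uIoo_of_le hlr]
    exact h
  · rw [← intervalIntegral.integral_congr_Ioo_of_le hlr h, intervalIntegral.integral_add
      (by simp) (Continuous.intervalIntegrable (by fun_prop) _ _),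
      intervalIntegral.integral_const_mul, integral_id, intervalIntegral.integral_const, smul_eq_mul]
    ring

theorem gg_int (p q δ c : ℝ) (hq : 1 < q) (hqp : q < p) (hδ0 : 0 < δ) (hδ1 : δ < 1)
    (hc : c * (1 - δ) = p - q) (hc1 : c < 1) (hb : q - δ * c < 1) :
    ∫ v in Set.Icc ((0 : ℝ), (0 : ℝ)) ((1 : ℝ), (1 : ℝ)), gg p q δ c v =
      p * ((1 - c) * ((1 - c) / 2 + (1 - (q - δ * c)))) +
        q * ((1 - (q - δ * c)) ^ 2 / (2 * δ)) := by
  rw [← Set.Icc_prod_Icc, Measure.volume_eq_prod, ← Measure.prod_restrict]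
  rw [integral_prod_symm]
  swap
  · apply Integrable.of_bound (C := p) (gg_meas p q δ c).aestronglyMeasurable
    refine Filter.Eventually.of_forall fun v => ?_
    rw [Real.norm_eq_abs, abs_le]
    unfold gg
    split_ifs <;> constructor <;> linarith
  have hin : ∀ y ∈ Set.Icc (0:ℝ) 1, ∫ x in Set.Icc (0:ℝ) 1, gg p q δ c (x, y) =
      if c ≤ y then p * max 0 (1 - (p - y)) else q * max 0 (1 - (q - δ * y)) := by
    intro y hy
    simp only [gg]
    split_ifs with h
    · exact inner_int _ _ (by linarith [hy.2])
    · exact inner_int _ _ (by nlinarith [hy.2, hy.1])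
  rw [setIntegral_congr_fun measurableSet_Icc hin, integral_Icc_eq_integral_Ioc,
    ← intervalIntegral.integral_of_le zero_le_one]
  have hc0 : 0 < c := by
    by_contra h
    nlinarith
  obtain ⟨y0, hy0⟩ : ∃ y0, δ * y0 = q - 1 := ⟨(q - 1) / δ, by field_simp⟩
  have hy00 : 0 < y0 := by
    by_contra h
    nlinarith
  have hy0c : y0 < c := by
    by_contra h
    nlinarith
  set F : ℝ → ℝ := fun y => if c ≤ y then p * max 0 (1 - (p - y)) else q * max 0 (1 - (q - δ * y))
    with hF
  obtain ⟨i1, v1⟩ := piece F 0 0 0 y0 hy00.le (by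
    intro y hy
    have h1 : ¬ c ≤ y := by linarith [hy.2]
    have h2 : 1 - (q - δ * y) ≤ 0 := by nlinarith [hy.2]
    simp only [hF]
    rw [if_neg h1, max_eq_left h2]; ring)
  obtain ⟨i2, v2⟩ := piece F (q * (1 - q)) (q * δ) y0 c hy0c.le (by
    intro y hy
    have h1 : ¬ c ≤ y := by linarith [hy.2]
    have h2 : 0 ≤ 1 - (q - δ * y) := by nlinarith [hy.1]
    simp only [hF]
    rw [if_neg h1, max_eq_right h2]; ring)
  obtain ⟨i3, v3⟩ := piece F (p * (1 - p)) p c 1 hc1.le (by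
    intro y hy
    have h1 : c ≤ y := hy.1.le
    have h2 : 0 ≤ 1 - (p - y) := by nlinarith [hy.1]
    simp only [hF]
    rw [if_pos h1, max_eq_right h2]; ring)
  rw [← intervalIntegral.integral_add_adjacent_intervals (i1.trans i2) i3,
    ← intervalIntegral.integral_add_adjacent_intervals i1 i2, v1, v2, v3]
  have hp : q = p - c * (1 - δ) := by linarith
  have e1 : p * (1 - p) * (1 - c) + p * ((1 ^ 2 - c ^ 2) / 2) =
      p * ((1 - c) * ((1 - c) / 2 + (1 - (q - δ * c)))) := by
    rw [hp]; ring
  have e2 : q * (1 - q) * (c - y0) + q * δ * ((c ^ 2 - y0 ^ 2) / 2) =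
      q * ((1 - (q - δ * c)) ^ 2 / (2 * δ)) := by
    have : 1 - (q - δ * c) = δ * (c - y0) := by linarith
    have h' : 1 - q = - (δ * y0) := by linarith
    rw [this, h']
    field_simp
    ring
  rw [← e1, ← e2]; ring

/-- Case 3: for `p > q > 1` and `δ ∈ [0,1)` with
`(p-q)/(1-δ) < 1` and `(q-δp)/(1-δ) < 1`, the menu
`{((0,0),0), ((1,1),p), ((1,δ),q)}` has revenue strictly less than `1/2`. -/
theorem case3_three_menu (p q δ : ℝ)
    (hq1 : 1 < q) (hqp : q < p)
    (hδ0 : 0 ≤ δ) (hδ1 : δ < 1)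
    (hA : (p - q) / (1 - δ) < 1)
    (hB : (q - δ * p) / (1 - δ) < 1) :
    rev {(((0 : ℝ), (0 : ℝ)), (0 : ℝ)),
         (((1 : ℝ), (1 : ℝ)), p),
         (((1 : ℝ), δ), q)} < 1 / 2 := by
  have hd : 0 < 1 - δ := by linarith
  obtain ⟨c, hcdef⟩ : ∃ c, c = (p - q) / (1 - δ) := ⟨_, rfl⟩
  have hc : c * (1 - δ) = p - q := by rw [hcdef]; field_simp
  have hc1 : c < 1 := by rw [hcdef]; exact hA
  rw [div_lt_iff₀ hd] at hB
  have hb : q - δ * c < 1 := by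
    by_contra h
    nlinarith
  have hδ : 0 < δ := by
    rcases hδ0.eq_or_lt with h | h
    · subst h; linarith
    · exact h
  have hc0 : 0 < c := by
    by_contra h
    nlinarith
  have hpos : 0 < q - δ * c := by nlinarith
  have key := aux_poly (1 - (q - δ * c)) c δ (by linarith) (by linarith) hc1 hδ (by linarith) hδ1
  have hi := gg_int p q δ c hq1 hqp hδ hδ1 hc hc1 hb
  have e1 : 1 - (1 - (q - δ * c)) + c = p := by linarith
  have e2 : 1 - (1 - (q - δ * c)) + δ * c = q := by linarith
  rw [e1, e2, ← hi] at key
  refine lt_of_le_of_lt ?_ key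
  unfold rev
  apply integral_mono_of_nonneg
  · refine Filter.Eventually.of_forall fun v => ?_
    apply Real.sSup_nonneg
    rintro r ⟨it, hit, rfl, -⟩
    simp only [Finset.mem_insert, Finset.mem_singleton] at hit
    rcases hit with rfl | rfl | rfl <;> simp <;> linarith
  · have : IsFiniteMeasure (volume.restrict (Set.Icc ((0 : ℝ), (0 : ℝ)) ((1 : ℝ), (1 : ℝ)))) :=
      isFiniteMeasure_restrict.mpr isCompact_Icc.measure_lt_top.ne
    apply Integrable.of_bound (C := p) (gg_meas p q δ c).aestronglyMeasurable
    refine Filter.Eventually.of_forall fun v => ?_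
    rw [Real.norm_eq_abs, abs_le]
    unfold gg
    split_ifs <;> constructor <;> linarith
  · exact Filter.Eventually.of_forall fun v => price_le p q δ c hq1 hqp hδ1 hc v
end
end
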